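/- Let N ≥ 3 be an integer and let s be a real number with 1 < s < N. Then for every smooth function u : ℝ^N → ℝ with compact support, ∫_{ℝ^N} |u(x)|^s / ‖x‖^s dx ≤ (s/(N−s))^s · ∫_{ℝ^N} ‖∇u(x)‖^s dx. -/

import Mathlib

open MeasureTheory

lemma hardy_euler {N : ℕ} (F : EuclideanSpace ℝ (Fin N) → ℝ) (hF : ContDiff ℝ 1 F)
    (hc : HasCompactSupport F) :
    Integrable (fun x => fderiv ℝ F x x) ∧ ∫ x, fderiv ℝ F x x = - (N * ∫ x, F x) := by
  have hcont : Continuous (fun x => fderiv ℝ F x) := hF.continuous_fderiv one_ne_zero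
  have hFint : Integrable F := hF.continuous.integrable_of_hasCompactSupport hc
  let e : Fin N → EuclideanSpace ℝ (Fin N) := fun i => EuclideanSpace.single i 1
  have hsum : ∀ x : EuclideanSpace ℝ (Fin N),
      fderiv ℝ F x x = ∑ i, x i * fderiv ℝ F x (e i) := by
    intro x
    have hx : x = ∑ i, x i • e i := by
      ext j
      simp [e, Finset.sum_apply, Pi.single_apply]
    have h := congrArg (fderiv ℝ F x) hx
    rw [map_sum] at h
    simpa using h
  have hint : ∀ i, Integrable (fun x : EuclideanSpace ℝ (Fin N) => x i * fderiv ℝ F x (e i)) := by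
    intro i
    refine Continuous.integrable_of_hasCompactSupport (by fun_prop) ?_
    exact (hc.fderiv_apply (𝕜 := ℝ) (e i)).mul_left
  have hpd : ∀ (i : Fin N) (x : EuclideanSpace ℝ (Fin N)),
      fderiv ℝ (fun y : EuclideanSpace ℝ (Fin N) => y i) x (e i) = 1 := by
    intro i x
    have : HasFDerivAt (fun y : EuclideanSpace ℝ (Fin N) => y i)
      (EuclideanSpace.proj i : EuclideanSpace ℝ (Fin N) →L[ℝ] ℝ) x :=
      (EuclideanSpace.proj i : EuclideanSpace ℝ (Fin N) →L[ℝ] ℝ).hasFDerivAt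
    rw [this.fderiv]
    simp [e]
  have hi : ∀ i, ∫ x : EuclideanSpace ℝ (Fin N), x i * fderiv ℝ F x (e i) = - ∫ x, F x := by
    intro i
    rw [integral_mul_fderiv_eq_neg_fderiv_mul_of_integrable]
    · simp [hpd]
    · simpa [hpd] using hFint
    · exact hint i
    · exact Continuous.integrable_of_hasCompactSupport
        ((by fun_prop : Continuous fun x : EuclideanSpace ℝ (Fin N) => x i).mul hF.continuous)
        hc.mul_left
    · intro x _
      fun_prop
    · intro x _
      exact hF.differentiable one_ne_zero x
  simp_rw [hsum]
  refine ⟨integrable_finsetSum _ fun i _ => hint i, ?_⟩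
  rw [integral_finsetSum _ fun i _ => hint i]
  simp [hi]

lemma hardy_young {a g c s : ℝ} (ha : 0 ≤ a) (hg : 0 ≤ g) (hc : 0 < c) (hs : 1 < s) :
    s * (a ^ (s - 1) * g) ≤ (s - 1) * c * a ^ s + c ^ (1 - s) * g ^ s := by
  have hs0 : 0 < s := by linarith
  have h := Real.geom_mean_le_arith_mean2_weighted (w₁ := (s - 1) / s) (w₂ := 1 / s)
    (p₁ := c * a ^ s) (p₂ := c ^ (1 - s) * g ^ s) (div_nonneg (by linarith) hs0.le)
    (by positivity) (by positivity) (by positivity) (by field_simp; ring)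
  have e1 : (c * a ^ s) ^ ((s - 1) / s) = c ^ ((s - 1) / s) * a ^ (s - 1) := by
    rw [Real.mul_rpow hc.le (by positivity), ← Real.rpow_mul ha]
    congr 2
    field_simp
  have e2 : (c ^ (1 - s) * g ^ s) ^ (1 / s) = c ^ (-((s - 1) / s)) * g := by
    rw [Real.mul_rpow (by positivity) (by positivity), ← Real.rpow_mul hg, ← Real.rpow_mul hc.le,
      mul_one_div_cancel hs0.ne', Real.rpow_one]
    congr 2
    field_simp
    ring
  rw [e1, e2, Real.rpow_neg hc.le] at h
  have hcp : 0 < c ^ ((s - 1) / s) := by positivity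
  have e3 : c ^ ((s - 1) / s) * a ^ (s - 1) * ((c ^ ((s - 1) / s))⁻¹ * g) = a ^ (s - 1) * g := by
    field_simp
  rw [e3] at h
  calc _ ≤ s * ((s - 1) / s * (c * a ^ s) + 1 / s * (c ^ (1 - s) * g ^ s)) := by gcongr
    _ = _ := by field_simp

lemma hardy_pointwise {t d r g M c s n : ℝ} (hr : 0 ≤ r) (hg : 0 ≤ g) (hM : 0 < M)
    (hrM : r ^ 2 ≤ M) (hd : |d| ≤ g * r) (hs : 1 < s) (hc : 0 < c) (hn : n = s + s * c) :
    c * (|t| ^ s * M ^ (-s / 2)) - c ^ (1 - s) * g ^ s ≤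
      (|t| ^ s * ((-s / 2) * M ^ (-s / 2 - 1) * (2 * r ^ 2))
        + M ^ (-s / 2) * (s * |t| ^ (s - 2) * t * d)) + n * (|t| ^ s * M ^ (-s / 2)) := by
  have hs0 : 0 < s := by linarith
  set P := M ^ (-s / 2) with hP
  have hPpos : 0 < P := by positivity
  have hQ : M ^ (-s / 2 - 1) * r ^ 2 ≤ P := by
    calc _ ≤ M ^ (-s / 2 - 1) * M := by gcongr
      _ = P := by rw [← Real.rpow_add_one hM.ne', hP]; congr 1; ring
  have hts : 0 ≤ |t| ^ s := by positivity
  have h1 : |t| ^ s * (M ^ (-s / 2 - 1) * r ^ 2) ≤ |t| ^ s * P := by gcongr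
  set a := |t| * M ^ (-(1:ℝ) / 2) with ha
  have ha0 : 0 ≤ a := by positivity
  have has : a ^ s = |t| ^ s * P := by
    rw [ha, Real.mul_rpow (abs_nonneg _) (by positivity), ← Real.rpow_mul hM.le, hP]
    congr 2; ring
  have hrs : r ≤ M ^ ((1:ℝ) / 2) := by
    rw [← Real.sqrt_eq_rpow]; exact Real.le_sqrt_of_sq_le hrM
  have hrP : r * P ≤ (M ^ (-(1:ℝ) / 2)) ^ (s - 1) := by
    calc r * P ≤ M ^ ((1:ℝ) / 2) * P := by gcongr
      _ = _ := by
        rw [hP, ← Real.rpow_add hM, ← Real.rpow_mul hM.le]; congr 1; ring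
  have htt : |(|t| ^ (s - 2) * t)| = |t| ^ (s - 1) := by
    rw [abs_mul, abs_of_nonneg (by positivity : 0 ≤ |t| ^ (s - 2))]
    rw [← Real.rpow_add_one' (abs_nonneg t) (by linarith)]
    congr 1; ring
  have hy := hardy_young ha0 hg hc hs
  have h2 : |(|t| ^ (s - 2) * t) * d| * P ≤ a ^ (s - 1) * g := by
    rw [abs_mul, htt]
    calc |t| ^ (s - 1) * |d| * P ≤ |t| ^ (s - 1) * (g * r) * P := by gcongr
      _ = |t| ^ (s - 1) * (r * P) * g := by ring
      _ ≤ |t| ^ (s - 1) * (M ^ (-(1:ℝ) / 2)) ^ (s - 1) * g := by gcongr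
      _ = a ^ (s - 1) * g := by rw [ha, Real.mul_rpow (abs_nonneg _) (by positivity)]
  have h3 : -(a ^ (s - 1) * g) ≤ (|t| ^ (s - 2) * t) * d * P := by
    have := mul_le_mul_of_nonneg_right (neg_abs_le ((|t| ^ (s - 2) * t) * d)) hPpos.le
    linarith
  have h4 := mul_le_mul_of_nonneg_left h3 hs0.le
  have h5 := mul_le_mul_of_nonneg_left h1 hs0.le
  rw [has] at hy
  subst hn
  nlinarith

lemma hardy_regularized
    (N : ℕ) (s : ℝ) (hs1 : 1 < s) (hsN : s < N)
    (u : EuclideanSpace ℝ (Fin N) → ℝ)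
    (hu : ContDiff ℝ 1 u) (hu_supp : HasCompactSupport u) (ε : ℝ) (hε : 0 < ε) :
    ∫ x : EuclideanSpace ℝ (Fin N), |u x| ^ s * (‖x‖ ^ 2 + ε) ^ (-s / 2)
      ≤ (s / (N - s)) ^ s * ∫ x : EuclideanSpace ℝ (Fin N), ‖gradient u x‖ ^ s := by
  have hs0 : 0 < s := by linarith
  have hNs : 0 < (N : ℝ) - s := by linarith
  have hM : ∀ x : EuclideanSpace ℝ (Fin N), 0 < ‖x‖ ^ 2 + ε := fun x => by positivity
  set F : EuclideanSpace ℝ (Fin N) → ℝ := fun x => |u x| ^ s * (‖x‖ ^ 2 + ε) ^ (-s / 2) with hFdef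
  have hF : ContDiff ℝ 1 F := by
    refine ContDiff.mul ?_ ?_
    · exact hu.norm_rpow hs1
    · exact ((contDiff_norm_sq ℝ).add contDiff_const).rpow_const_of_ne fun x => (hM x).ne'
  have hc : HasCompactSupport F := by
    refine HasCompactSupport.mul_right ?_
    exact hu_supp.comp_left (g := fun t : ℝ => |t| ^ s) (by simp [hs0.ne'])
  have hFint : Integrable F := hF.continuous.integrable_of_hasCompactSupport hc
  obtain ⟨hDint, hD⟩ := hardy_euler F hF hc
  have hgrad : ∀ x, ‖gradient u x‖ = ‖fderiv ℝ u x‖ := fun x => by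
    rw [gradient, LinearIsometryEquiv.norm_map]
  simp_rw [hgrad]
  have hGint : Integrable (fun x => ‖fderiv ℝ u x‖ ^ s) := by
    refine Continuous.integrable_of_hasCompactSupport ?_ ?_
    · exact (hu.continuous_fderiv one_ne_zero).norm.rpow_const fun x => Or.inr hs0.le
    · exact (hu_supp.fderiv (𝕜 := ℝ)).comp_left
        (g := fun t : EuclideanSpace ℝ (Fin N) →L[ℝ] ℝ => ‖t‖ ^ s) (by simp [hs0.ne'])
  set c := ((N : ℝ) - s) / s with hcdef
  have hcpos : 0 < c := by positivity
  have hpt : ∀ x, c * F x - c ^ (1 - s) * ‖fderiv ℝ u x‖ ^ s ≤ fderiv ℝ F x x + N * F x := by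
    intro x
    have hux : HasFDerivAt u (fderiv ℝ u x) x := (hu.differentiable one_ne_zero x).hasFDerivAt
    have h1 := (hasDerivAt_abs_rpow (u x) hs1).comp_hasFDerivAt x hux
    have h2 : HasFDerivAt (fun y : EuclideanSpace ℝ (Fin N) => ‖y‖ ^ 2 + ε)
        (2 • innerSL ℝ x) x := (hasStrictFDerivAt_norm_sq x).hasFDerivAt.add_const ε
    have h3 := h2.rpow_const (p := -s / 2) (Or.inl (hM x).ne')
    have h4 : HasFDerivAt F _ x := h1.mul h3
    have key := hardy_pointwise (t := u x) (d := fderiv ℝ u x x) (r := ‖x‖)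
      (g := ‖fderiv ℝ u x‖) (M := ‖x‖ ^ 2 + ε) (c := c) (s := s) (n := N) (norm_nonneg _)
      (norm_nonneg _) (hM x) (by linarith) ((fderiv ℝ u x).le_opNorm x) hs1 hcpos
      (by rw [hcdef]; field_simp; ring)
    rw [h4.fderiv]
    convert key using 2
    simp
  have hI := integral_mono ((hFint.const_mul c).sub (hGint.const_mul _))
    (hDint.add (hFint.const_mul _)) hpt
  simp only [Pi.add_apply, Pi.sub_apply] at hI
  rw [integral_sub (hFint.const_mul c) (hGint.const_mul _),
    integral_add hDint (hFint.const_mul _), hD] at hI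
  simp only [integral_const_mul] at hI
  have hI2 : c * ∫ x, F x ≤ c ^ (1 - s) * ∫ x, ‖fderiv ℝ u x‖ ^ s := by linarith
  have hcc : c ^ (1 - s) = c * (s / (N - s)) ^ s := by
    rw [show s / ((N : ℝ) - s) = c⁻¹ by rw [hcdef, inv_div], Real.inv_rpow hcpos.le,
      Real.rpow_sub hcpos, Real.rpow_one, div_eq_mul_inv]
  rw [hcc, mul_assoc] at hI2
  exact le_of_mul_le_mul_left hI2 hcpos

/-- Constant-exponent Hardy inequality (Mitidieri's form): for `N ≥ 3`, `1 < s < N`,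
and every smooth compactly supported `u : ℝ^N → ℝ`,
`∫ |u x|^s / ‖x‖^s dx ≤ (s/(N-s))^s * ∫ ‖∇u x‖^s dx`. -/
theorem hardy_inequality_constant_exponent
    (N : ℕ) (hN : 3 ≤ N) (s : ℝ) (hs1 : 1 < s) (hsN : s < N)
    (u : EuclideanSpace ℝ (Fin N) → ℝ)
    (hu_smooth : ContDiff ℝ (⊤ : ℕ∞) u) (hu_supp : HasCompactSupport u) :
    ∫ x : EuclideanSpace ℝ (Fin N), |u x| ^ s / ‖x‖ ^ s
      ≤ (s / (N - s)) ^ s * ∫ x : EuclideanSpace ℝ (Fin N), ‖gradient u x‖ ^ s := by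
  have hs0 : 0 < s := by linarith
  have hNs : 0 < (N : ℝ) - s := by linarith
  have hu : ContDiff ℝ 1 u := hu_smooth.of_le (by exact_mod_cast le_top)
  by_cases hint : Integrable (fun x : EuclideanSpace ℝ (Fin N) => |u x| ^ s / ‖x‖ ^ s)
  swap
  · rw [integral_undef hint]
    exact mul_nonneg (by positivity) (integral_nonneg fun x => by positivity)
  haveI : Nontrivial (EuclideanSpace ℝ (Fin N)) := by
    haveI : Nonempty (Fin N) := ⟨⟨0, by omega⟩⟩
    infer_instance
  have hne : ∀ᵐ x : EuclideanSpace ℝ (Fin N), x ≠ 0 := by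
    simp [ae_iff]
  have hpow : ∀ x : EuclideanSpace ℝ (Fin N), (‖x‖ ^ 2) ^ (-s / 2) = (‖x‖ ^ s)⁻¹ := by
    intro x
    rw [← Real.rpow_natCast, ← Real.rpow_mul (norm_nonneg _), ← Real.rpow_neg (norm_nonneg _)]
    congr 1
    push_cast
    ring
  have hlim : Filter.Tendsto (fun n : ℕ => ∫ x : EuclideanSpace ℝ (Fin N),
      |u x| ^ s * (‖x‖ ^ 2 + 1 / ((n : ℝ) + 1)) ^ (-s / 2)) Filter.atTop
      (nhds (∫ x : EuclideanSpace ℝ (Fin N), |u x| ^ s / ‖x‖ ^ s)) := by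
    refine tendsto_integral_of_dominated_convergence _ ?_ hint ?_ ?_
    · intro n
      refine Continuous.aestronglyMeasurable ?_
      refine (hu.continuous.abs.rpow_const fun x => Or.inr hs0.le).mul ?_
      exact ((continuous_norm.pow 2).add continuous_const).rpow_const
        fun x => Or.inl (ne_of_gt (add_pos_of_nonneg_of_pos (sq_nonneg ‖x‖) (by positivity)))
    · intro n
      filter_upwards [hne] with x hx
      have hx' : 0 < ‖x‖ := norm_pos_iff.2 hx
      rw [Real.norm_of_nonneg (by positivity), div_eq_mul_inv (|u x| ^ s), ← hpow]
      refine mul_le_mul_of_nonneg_left ?_ (by positivity)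
      refine Real.rpow_le_rpow_of_nonpos (by positivity) ?_ (by linarith)
      have : (0:ℝ) < 1 / ((n : ℝ) + 1) := by positivity
      linarith
    · filter_upwards [hne] with x hx
      have hx' : 0 < ‖x‖ := norm_pos_iff.2 hx
      rw [div_eq_mul_inv (|u x| ^ s), ← hpow]
      refine Filter.Tendsto.const_mul _ ?_
      refine Filter.Tendsto.rpow_const ?_ (Or.inl (by positivity))
      simpa using (tendsto_one_div_add_atTop_nhds_zero_nat (𝕜 := ℝ)).const_add (‖x‖ ^ 2)
  exact le_of_tendsto' hlim fun n =>
    hardy_regularized N s hs1 hsN u hu hu_supp _ (by positivity)
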